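/- arXiv:2112.02545 — 3 statements merged into one kernel-verified Lean document; each statement's English description precedes it below -/
import Mathlib

section
/- For every j with 1 ≤ j ≤ N − 1, the j-th elementary symmetric polynomial e_j(cot θ_1, cot θ_2, …, cot θ_N) of the cotangents of the interior angles does not depend on t: writing θ_k(t) for the interior angle at w_k when the parameter is t, for all real t and t′ one has e_j(cot θ_1(t), …, cot θ_N(t)) = e_j(cot θ_1(t′), …, cot θ_N(t′)). -/
open Real Finset

lemma cot_angle_aux (r : ℂ) (x y w : ℂ) (hr : (x - y) / (w - y) = r)
    (him : 0 < r.im) :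
    Real.cos (EuclideanGeometry.angle x y w) / Real.sin (EuclideanGeometry.angle x y w)
      = r.re / r.im := by
  have hr0 : r ≠ 0 := by
    rintro rfl
    simp at him
  have h1 : x - y ≠ 0 := by
    intro h
    rw [h, zero_div] at hr
    exact hr0 hr.symm
  have h2 : w - y ≠ 0 := by
    intro h
    rw [h, div_zero] at hr
    exact hr0 hr.symm
  unfold EuclideanGeometry.angle
  simp only [vsub_eq_sub]
  rw [Complex.angle_eq_abs_arg h1 h2, hr, abs_of_nonneg (Complex.arg_nonneg_iff.2 him.le),
    Complex.cos_arg hr0, Complex.sin_arg]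
  have : ‖r‖ ≠ 0 := norm_ne_zero_iff.2 hr0
  field_simp

lemma ratio_aux (d : ℝ) (hd : |d| < 1) (z q : ℂ) (hz : ‖z‖ = 1) (hq : ‖q‖ = 1) (hq1 : q ≠ 1) :
    ∃ n : ℝ, 0 < n ∧
    ((d * (starRingEnd ℂ) (z * q⁻¹) - 1) / ((starRingEnd ℂ) (z * q⁻¹) - d) -
      (d * (starRingEnd ℂ) z - 1) / ((starRingEnd ℂ) z - d)) /
    ((d * (starRingEnd ℂ) (z * q) - 1) / ((starRingEnd ℂ) (z * q) - d) -
      (d * (starRingEnd ℂ) z - 1) / ((starRingEnd ℂ) z - d)) =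
    (n : ℂ) * (d * z + d * (starRingEnd ℂ) z - (starRingEnd ℂ) q - d ^ 2 * q) := by
  have hne : ∀ u : ℂ, ‖u‖ = 1 → u - d ≠ 0 := by
    intro u hu h
    rw [sub_eq_zero.1 h, Complex.norm_real, Real.norm_eq_abs] at hu
    linarith
  have hci : ∀ u : ℂ, ‖u‖ = 1 → (starRingEnd ℂ) u = u⁻¹ := fun u hu =>
    (Complex.inv_eq_conj hu).symm
  have hz0 : z ≠ 0 := norm_ne_zero_iff.1 (by rw [hz]; exact one_ne_zero)
  have hq0 : q ≠ 0 := norm_ne_zero_iff.1 (by rw [hq]; exact one_ne_zero)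
  have hd2 : (1 - (d : ℂ) ^ 2) ≠ 0 := by
    have : (1 - d ^ 2 : ℝ) ≠ 0 := by
      have := (sq_lt_one_iff_abs_lt_one d).2 hd
      linarith
    exact_mod_cast this
  have e0 := hne (z⁻¹) (by simp [hz])
  have e1 := hne (z⁻¹ * q) (by simp [hz, hq])
  have e2 := hne (z⁻¹ * q⁻¹) (by simp [hz, hq])
  have e3 := hne (z * q⁻¹) (by simp [hz, hq])
  have hq1' : 1 - q ≠ 0 := sub_ne_zero.2 hq1.symm
  refine ⟨(Complex.normSq (z * q⁻¹ - d))⁻¹, inv_pos.2 (Complex.normSq_pos.2 e3), ?_⟩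
  rw [Complex.ofReal_inv, Complex.normSq_eq_conj_mul_self]
  simp only [map_sub, map_mul, map_inv₀, hci z hz, hci q hq, inv_inv, Complex.conj_ofReal]
  have f0 : 1 - d * z ≠ 0 := by
    intro h; apply e0; field_simp; linear_combination h
  have f1 : q - d * z ≠ 0 := by
    intro h; apply e1; field_simp; linear_combination h
  have f2 : 1 - d * z * q ≠ 0 := by
    intro h; apply e2; field_simp; linear_combination h
  have f3 : z - d * q ≠ 0 := by
    intro h; apply e3; field_simp; linear_combination h
  have key1 : (d * (z⁻¹ * q) - 1) / (z⁻¹ * q - d) - (d * z⁻¹ - 1) / (z⁻¹ - d)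
      = (1 - d ^ 2) * z * (q - 1) / ((q - d * z) * (1 - d * z)) * 1 := by
    have a1 : z⁻¹ * q - d = (q - d * z) / z := by field_simp
    have a2 : z⁻¹ - d = (1 - d * z) / z := by field_simp
    rw [a1, a2]; field_simp; ring
  have key2 : (d * (z⁻¹ * q⁻¹) - 1) / (z⁻¹ * q⁻¹ - d) - (d * z⁻¹ - 1) / (z⁻¹ - d)
      = (1 - d ^ 2) * z * (1 - q) / ((1 - d * z * q) * (1 - d * z)) := by
    have a1 : z⁻¹ * q⁻¹ - d = (1 - d * z * q) / (z * q) := by field_simp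
    have a2 : z⁻¹ - d = (1 - d * z) / z := by field_simp
    rw [a1, a2]; field_simp; ring
  rw [key1, key2]
  have a3 : z⁻¹ * q - d = (q - d * z) / z := by field_simp
  have a4 : z * q⁻¹ - d = (z - d * q) / q := by field_simp
  rw [a3, a4]
  field_simp
  ring

lemma cot_formula (N : ℕ) (hN : 3 ≤ N) (d : ℝ) (hd : |d| < 1) (t : ℝ) (z w : ℤ → ℂ)
    (hz : ∀ (k : ℤ), z k = Complex.exp (Complex.I *
      ((2 * (Real.pi / N) * (k : ℝ) + t : ℝ) : ℂ)))
    (hw : ∀ (k : ℤ), w k = ((d : ℂ) * (starRingEnd ℂ) (z k) - 1) /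
      ((starRingEnd ℂ) (z k) - (d : ℂ))) (k : ℤ) :
    Real.cos (EuclideanGeometry.angle (w (k - 1)) (w k) (w (k + 1))) /
      Real.sin (EuclideanGeometry.angle (w (k - 1)) (w k) (w (k + 1))) =
    2 * d / ((1 - d ^ 2) * Real.sin (2 * (Real.pi / N))) *
        Real.cos (2 * (Real.pi / N) * (k : ℝ) + t) +
      -((1 + d ^ 2) * Real.cos (2 * (Real.pi / N))) /
        ((1 - d ^ 2) * Real.sin (2 * (Real.pi / N))) := by
  set β : ℝ := 2 * (Real.pi / N) with hβ
  have hN' : (3 : ℝ) ≤ N := by exact_mod_cast hN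
  have hs : 0 < Real.sin β := by
    apply Real.sin_pos_of_pos_of_lt_pi
    · positivity
    · rw [hβ, ← mul_div_assoc, div_lt_iff₀ (by linarith)]
      nlinarith [Real.pi_pos]
  have hd2 : 0 < 1 - d ^ 2 := by
    have := (sq_lt_one_iff_abs_lt_one d).2 hd
    linarith
  set q : ℂ := Complex.exp (β * Complex.I) with hqd
  have hexp : ∀ x : ℝ, Complex.exp (Complex.I * (x : ℂ)) = Complex.exp (x * Complex.I) := by
    intro x; rw [mul_comm]
  have hq : ‖q‖ = 1 := Complex.norm_exp_ofReal_mul_I β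
  have hzk : ‖z k‖ = 1 := by rw [hz, hexp]; exact Complex.norm_exp_ofReal_mul_I _
  have hqim : q.im = Real.sin β := Complex.exp_ofReal_mul_I_im β
  have hqre : q.re = Real.cos β := Complex.exp_ofReal_mul_I_re β
  have hzre : (z k).re = Real.cos (β * k + t) := by
    rw [hz, hexp]; exact Complex.exp_ofReal_mul_I_re _
  have hq1 : q ≠ 1 := by
    intro h
    rw [h] at hqim
    simp at hqim
    linarith
  have hzp : z (k + 1) = z k * q := by
    rw [hz, hz, hqd, ← Complex.exp_add]; congr 1; push_cast; ring
  have hzm : z (k - 1) = z k * q⁻¹ := by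
    rw [hz, hz, hqd, ← Complex.exp_neg, ← Complex.exp_add]; congr 1; push_cast; ring
  obtain ⟨n, hn, h⟩ := ratio_aux d hd (z k) q hzk hq hq1
  rw [← hzp, ← hzm, ← hw, ← hw, ← hw] at h
  have him : ((n : ℂ) * (d * z k + d * (starRingEnd ℂ) (z k) - (starRingEnd ℂ) q
      - d ^ 2 * q)).im = n * ((1 - d ^ 2) * Real.sin β) := by
    rw [Complex.im_ofReal_mul, ← Complex.ofReal_pow]
    simp only [Complex.sub_im, Complex.add_im, Complex.im_ofReal_mul, Complex.conj_im, hqim]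
    ring
  have hre : ((n : ℂ) * (d * z k + d * (starRingEnd ℂ) (z k) - (starRingEnd ℂ) q
      - d ^ 2 * q)).re = n * (2 * d * Real.cos (β * k + t) - (1 + d ^ 2) * Real.cos β) := by
    rw [Complex.re_ofReal_mul, ← Complex.ofReal_pow]
    simp only [Complex.sub_re, Complex.add_re, Complex.re_ofReal_mul, Complex.conj_re, hqre, hzre]
    ring
  rw [cot_angle_aux _ _ _ _ h (by rw [him]; positivity), him, hre]
  field_simp
  ring

lemma prod_aux (N : ℕ) (hN : 0 < N) (u a : ℂ) :
    ∏ k ∈ Finset.Icc (1 : ℤ) N, (u - Complex.exp (2 * Real.pi * Complex.I / N) ^ k * a)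
      = u ^ N - a ^ N := by
  have hp := Complex.isPrimitiveRoot_exp N hN.ne'
  set ζ := Complex.exp (2 * Real.pi * Complex.I / N) with hζ
  have hζ0 : ζ ≠ 0 := Complex.exp_ne_zero _
  have h1 : ∏ k ∈ Finset.Icc (1 : ℤ) N, (u - ζ ^ k * a)
      = ∏ i ∈ Finset.range N, (u - ζ ^ i * (ζ * a)) := by
    symm
    refine Finset.prod_bij (fun i _ => (i : ℤ) + 1) ?_ ?_ ?_ ?_
    · intro i hi; simp at hi ⊢; omega
    · intro i _ j _ h; simpa using h
    · intro k hk
      simp at hk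
      exact ⟨(k - 1).toNat, by simp; omega, by omega⟩
    · intro i _
      rw [zpow_add₀ hζ0, zpow_natCast, zpow_one, mul_assoc]
  rw [h1]
  have h2 := X_pow_sub_C_eq_prod (R := ℂ) hp hN (α := ζ * a) (a := a ^ N)
    (by rw [mul_pow, hp.pow_eq_one, one_mul])
  have h3 := congrArg (Polynomial.eval u) h2
  rw [Polynomial.eval_prod] at h3
  simpa using h3.symm

lemma cos_prod (N : ℕ) (hN : 0 < N) (ψ t : ℝ) :
    ∏ k ∈ Finset.Icc (1 : ℤ) N,
        (2 * (Real.cos ψ - Real.cos (2 * (Real.pi / N) * (k : ℝ) + t))) =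
      2 * (Real.cos (N * ψ) - Real.cos (N * t)) := by
  apply Complex.ofReal_injective
  have hp := Complex.isPrimitiveRoot_exp N hN.ne'
  set u : ℂ := Complex.exp (ψ * Complex.I) with hu
  set a : ℂ := Complex.exp (t * Complex.I) with ha
  have hu0 : u ≠ 0 := Complex.exp_ne_zero _
  have ha0 : a ≠ 0 := Complex.exp_ne_zero _
  have hc : ∀ x : ℝ, ((2 * Real.cos x : ℝ) : ℂ) =
      Complex.exp (x * Complex.I) + (Complex.exp (x * Complex.I))⁻¹ := by
    intro x
    rw [← Complex.exp_neg]
    push_cast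
    rw [Complex.two_cos, neg_mul]
  set ζ := Complex.exp (2 * Real.pi * Complex.I / N) with hζ
  have hζ0 : ζ ≠ 0 := Complex.exp_ne_zero _
  have hNt : Complex.exp (((N * t : ℝ) : ℂ) * Complex.I) = a ^ N := by
    rw [ha, ← Complex.exp_nat_mul]; congr 1; push_cast; ring
  have hNψ : Complex.exp (((N * ψ : ℝ) : ℂ) * Complex.I) = u ^ N := by
    rw [hu, ← Complex.exp_nat_mul]; congr 1; push_cast; ring
  have hk : ∀ k : ℤ, Complex.exp (((2 * (Real.pi / N) * (k : ℝ) + t : ℝ) : ℂ) * Complex.I)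
      = ζ ^ k * a := by
    intro k
    rw [hζ, ha, ← Complex.exp_int_mul, ← Complex.exp_add]; congr 1; push_cast; ring
  have step : ∀ k : ℤ, ((2 * (Real.cos ψ - Real.cos (2 * (Real.pi / N) * (k : ℝ) + t)) : ℝ) : ℂ)
      = (u - ζ ^ k * a) * ((0 - ζ ^ k * a)⁻¹ * (u⁻¹ - ζ ^ k * a)) := by
    intro k
    have hb0 : ζ ^ k * a ≠ 0 := mul_ne_zero (zpow_ne_zero _ hζ0) ha0
    rw [mul_sub, Complex.ofReal_sub, hc, hc, hk, ← hu]
    generalize ζ ^ k * a = b at hb0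
    rw [zero_sub]
    field_simp
    ring
  rw [Complex.ofReal_prod, Finset.prod_congr rfl (fun k _ => step k), Finset.prod_mul_distrib,
    Finset.prod_mul_distrib, Finset.prod_inv_distrib, prod_aux N hN, prod_aux N hN,
    prod_aux N hN, mul_sub (2 : ℝ), Complex.ofReal_sub, hc, hc, hNt, hNψ, zero_pow hN.ne', zero_sub, inv_pow]
  have := pow_ne_zero N hu0
  have := pow_ne_zero N ha0
  field_simp
  ring

lemma poly_aux (N : ℕ) (hN : 0 < N) (A B : ℝ) (hA : A ≠ 0) (t t' : ℝ) :
    ∃ D : ℝ, ∏ k ∈ Finset.Icc (1 : ℤ) N, (Polynomial.X + Polynomial.C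
        (A * Real.cos (2 * (Real.pi / N) * (k : ℝ) + t) + B)) =
      ∏ k ∈ Finset.Icc (1 : ℤ) N, (Polynomial.X + Polynomial.C
        (A * Real.cos (2 * (Real.pi / N) * (k : ℝ) + t') + B)) + Polynomial.C D := by
  refine ⟨(-A / 2) ^ N * (2 * (Real.cos (N * t') - Real.cos (N * t))), ?_⟩
  have hev : ∀ s ψ : ℝ, ∏ k ∈ Finset.Icc (1 : ℤ) N, (-(A * Real.cos ψ + B) +
      (A * Real.cos (2 * (Real.pi / N) * (k : ℝ) + s) + B)) =
      (-A / 2) ^ N * (2 * (Real.cos (N * ψ) - Real.cos (N * s))) := by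
    intro s ψ
    rw [← cos_prod N hN]
    have : (-A / 2) ^ N = ∏ k ∈ Finset.Icc (1 : ℤ) N, (-A / 2) := by
      rw [Finset.prod_const]; simp only [Int.card_Icc]; congr 1; omega
    rw [this, ← Finset.prod_mul_distrib]
    exact Finset.prod_congr rfl (fun k _ => by ring)
  apply Polynomial.eq_of_infinite_eval_eq
  have hinf : (Set.Icc (-1 : ℝ) 1).Infinite := Set.Icc_infinite (by norm_num)
  have hinj : Set.InjOn (fun x : ℝ => -(A * x + B)) (Set.Icc (-1 : ℝ) 1) := by
    intro x _ y _ h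
    simpa [hA] using h
  refine (hinf.image hinj).mono ?_
  rintro _ ⟨x, hx, rfl⟩
  have hc : Real.cos (Real.arccos x) = x := Real.cos_arccos hx.1 hx.2
  simp only [Set.mem_ofPred_eq, Polynomial.eval_add, Polynomial.eval_prod, Polynomial.eval_X,
    Polynomial.eval_C]
  rw [← hc, hev, hev]
  ring

/-- For `1 ≤ j ≤ N − 1`, the `j`-th elementary symmetric polynomial of the
cotangents of the interior angles of the harmonic `N`-gon does not depend on
the Poncelet parameter `t`. -/
theorem esymm_cot_invariant (N : ℕ) (hN : 3 ≤ N) (d : ℝ) (hd : |d| < 1)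
    (z w : ℝ → ℤ → ℂ) (θ : ℝ → ℤ → ℝ)
    (hz : ∀ (t : ℝ) (k : ℤ), z t k = Complex.exp (Complex.I *
      ((2 * (Real.pi / N) * (k : ℝ) + t : ℝ) : ℂ)))
    (hw : ∀ (t : ℝ) (k : ℤ), w t k = ((d : ℂ) * (starRingEnd ℂ) (z t k) - 1) /
      ((starRingEnd ℂ) (z t k) - (d : ℂ)))
    (hθ : ∀ (t : ℝ) (k : ℤ),
      θ t k = EuclideanGeometry.angle (w t (k - 1)) (w t k) (w t (k + 1)))
    (j : ℕ) (hj1 : 1 ≤ j) (hjN : j ≤ N - 1) (t t' : ℝ) :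
    ∑ A ∈ (Finset.Icc (1 : ℤ) N).powersetCard j,
        ∏ k ∈ A, Real.cos (θ t k) / Real.sin (θ t k) =
      ∑ A ∈ (Finset.Icc (1 : ℤ) N).powersetCard j,
        ∏ k ∈ A, Real.cos (θ t' k) / Real.sin (θ t' k) := by
  simp only [hθ, fun s k => cot_formula N hN d hd s (z s) (w s) (hz s) (hw s) k]
  generalize 2 * d / ((1 - d ^ 2) * Real.sin (2 * (Real.pi / N))) = A
  generalize -((1 + d ^ 2) * Real.cos (2 * (Real.pi / N))) /
        ((1 - d ^ 2) * Real.sin (2 * (Real.pi / N))) = B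
  by_cases hA : A = 0
  · simp [hA]
  obtain ⟨D, hD⟩ := poly_aux N (by omega) A B hA t t'
  have hcard : #(Finset.Icc (1 : ℤ) N) = N := by simp
  have hc := congrArg (fun p => Polynomial.coeff p (N - j)) hD
  simp only [Polynomial.coeff_add] at hc
  rw [Finset.prod_X_add_C_coeff _ _ (by omega), Finset.prod_X_add_C_coeff _ _ (by omega), hcard,
    Polynomial.coeff_C_of_ne_zero (by omega), add_zero, Nat.sub_sub_self (by omega)] at hc
  exact hc
end

section
/- For each index k let q_k be the pole of the line through v_k and v_{k+1} with respect to the unit circle centered at the focus f_h = (−c_h, 0). Then: (i) every q_k lies on the circle of center O_1 = (−c_h·(1 + b_h²)/b_h², 0) and radius R_1 = a_h/b_h², i.e., |q_k − O_1| = R_1; and (ii) with κ = √(a_h² − c_h²·cos²α), x_1 = −c_h·(a_h² + (1 − c_h²)·cos²α)/κ², a_1 = a_h·cos α/κ², b_1 = a_h·cos α/(b_h·κ), each line through q_k and q_{k+1} is tangent to the ellipse (x − x_1)²/a_1² + y²/b_1² = 1, i.e., meets it in exactly one point. -/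
open Real

/-- Solving the two linear equations of the pole. -/
lemma pole_formula (a b c C S x y u1 u2 : ℝ) (hC : 0 < C) (hS : 0 < S)
    (hxy : x ^ 2 + y ^ 2 = 1)
    (h1 : (a / C * (x * C + y * S) + c) * u1 + (b / C * (y * C - x * S)) * u2 = 1)
    (h2 : (a / C * (x * C - y * S) + c) * u1 + (b / C * (y * C + x * S)) * u2 = 1) :
    u1 * (a + c * x) = x ∧ b * u2 * (a + c * x) = a * y := by
  have e1 : (a * x + c) * u1 + b * y * u2 = 1 := by
    field_simp at h1 h2
    have : C * ((a * x + c) * u1 + b * y * u2 - 1) = 0 := by linear_combination (h1 + h2) / 2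
    rcases mul_eq_zero.1 this with h | h
    · exact absurd h hC.ne'
    · linarith
  have e2 : a * y * u1 = b * x * u2 := by
    field_simp at h1 h2
    have : S * (a * y * u1 - b * x * u2) = 0 := by linear_combination (h1 - h2) / 2
    rcases mul_eq_zero.1 this with h | h
    · exact absurd h hS.ne'
    · linarith
  have e3 : u1 * (a + c * x) = x := by
    linear_combination x * e1 + y * e2 - a * u1 * hxy
  have e4 : b * u2 = y * (1 - c * u1) := by
    linear_combination y * e1 - x * e2 - b * u2 * hxy
  refine ⟨e3, ?_⟩
  linear_combination (a + c * x) * e4 - c * y * e3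

/-- A line through a point `T` of an ellipse, orthogonal to the gradient there, meets it once. -/
lemma tangent_unique (x1 a1 b1 T1 T2 d1 d2 r : ℝ) (ha : a1 ≠ 0) (hb : b1 ≠ 0)
    (hd : d1 ≠ 0 ∨ d2 ≠ 0)
    (hT : (T1 - x1) ^ 2 / a1 ^ 2 + T2 ^ 2 / b1 ^ 2 = 1)
    (ht : (T1 - x1) * d1 / a1 ^ 2 + T2 * d2 / b1 ^ 2 = 0)
    (hp : (T1 + r * d1 - x1) ^ 2 / a1 ^ 2 + (T2 + r * d2) ^ 2 / b1 ^ 2 = 1) : r = 0 := by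
  have h : r ^ 2 * (d1 ^ 2 / a1 ^ 2 + d2 ^ 2 / b1 ^ 2) = 0 := by
    linear_combination hp - hT - 2 * r * ht
  have hpos : 0 < d1 ^ 2 / a1 ^ 2 + d2 ^ 2 / b1 ^ 2 := by
    rcases hd with h | h <;> positivity
  rcases mul_eq_zero.1 h with h | h
  · exact pow_eq_zero_iff (two_ne_zero) |>.1 h
  · exact absurd h hpos.ne'

set_option maxHeartbeats 1000000 in
/-- The polar image of the Poncelet homothetic family with respect to the unit
circle centered at a focus `f_h = (−c_h, 0)` of the inner ellipse is a harmonic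
family: the poles `q_k` of the sides lie on the circle of center
`O_1 = (−c_h(1 + b_h²)/b_h², 0)` and radius `R_1 = a_h/b_h²`, and the lines
through consecutive poles are tangent to the stated ellipse. -/
theorem polar_of_homothetic_is_harmonic (N : ℕ) (hN : 3 ≤ N)
    (ah bh t : ℝ) (hab : bh < ah) (hb : 0 < bh)
    (ch : ℝ) (hch : ch = Real.sqrt (ah ^ 2 - bh ^ 2))
    (v : ℤ → ℝ × ℝ)
    (hv : ∀ k : ℤ, v k =
      ((ah / Real.cos (Real.pi / N)) * Real.cos (2 * (Real.pi / N) * (k : ℝ) + t),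
       (bh / Real.cos (Real.pi / N)) * Real.sin (2 * (Real.pi / N) * (k : ℝ) + t)))
    (fh : ℝ × ℝ) (hfh : fh = (-ch, 0))
    (q : ℤ → ℝ × ℝ)
    (hq : ∀ k : ℤ,
      ((v k).1 - fh.1) * ((q k).1 - fh.1) + ((v k).2 - fh.2) * ((q k).2 - fh.2) = 1 ∧
      ((v (k + 1)).1 - fh.1) * ((q k).1 - fh.1) + ((v (k + 1)).2 - fh.2) * ((q k).2 - fh.2) = 1)
    (O1 : ℝ × ℝ) (hO1 : O1 = (-ch * (1 + bh ^ 2) / bh ^ 2, 0))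
    (R1 : ℝ) (hR1 : R1 = ah / bh ^ 2)
    (κ x1 a1 b1 : ℝ)
    (hκ : κ = Real.sqrt (ah ^ 2 - ch ^ 2 * Real.cos (Real.pi / N) ^ 2))
    (hx1 : x1 = -ch * (ah ^ 2 + (1 - ch ^ 2) * Real.cos (Real.pi / N) ^ 2) / κ ^ 2)
    (ha1 : a1 = ah * Real.cos (Real.pi / N) / κ ^ 2)
    (hb1 : b1 = ah * Real.cos (Real.pi / N) / (bh * κ)) :
    (∀ k : ℤ, Real.sqrt (((q k).1 - O1.1) ^ 2 + ((q k).2 - O1.2) ^ 2) = R1) ∧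
    (∀ k : ℤ, ∃! p : ℝ × ℝ,
      (∃ s : ℝ, p = q k + s • (q (k + 1) - q k)) ∧
      (p.1 - x1) ^ 2 / a1 ^ 2 + p.2 ^ 2 / b1 ^ 2 = 1) := by
  have hN' : (3 : ℝ) ≤ N := by exact_mod_cast hN
  set α := Real.pi / N with hα
  have hα0 : 0 < α := by have := Real.pi_pos; positivity
  have hα1 : α < Real.pi / 2 := by
    have := Real.pi_pos
    rw [hα]; apply div_lt_div_of_pos_left this <;> linarith
  have hC : 0 < Real.cos α := Real.cos_pos_of_mem_Ioo ⟨by linarith, hα1⟩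
  have hS : 0 < Real.sin α := Real.sin_pos_of_pos_of_lt_pi hα0 (by linarith)
  have hCS := Real.sin_sq_add_cos_sq α
  have ha : 0 < ah := hb.trans hab
  have hc2 : ch ^ 2 = ah ^ 2 - bh ^ 2 := by
    rw [hch, Real.sq_sqrt]; nlinarith
  have hc0 : 0 ≤ ch := hch ▸ Real.sqrt_nonneg _
  have hca : ch < ah := by nlinarith
  have hK0 : 0 < ah ^ 2 - ch ^ 2 * Real.cos α ^ 2 := by
    nlinarith [sq_nonneg (ch * Real.sin α), sq_nonneg bh, mul_pos hb hb]
  have hK : κ ^ 2 = ah ^ 2 - ch ^ 2 * Real.cos α ^ 2 := by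
    rw [hκ, Real.sq_sqrt hK0.le]
  have hκ0 : 0 < κ := hκ ▸ Real.sqrt_pos.2 hK0
  have hD : ∀ z : ℝ, 0 < ah + ch * Real.cos z := fun z => by
    nlinarith [Real.neg_one_le_cos z]
  have key : ∀ k : ℤ, ((q k).1 + ch) * (ah + ch * Real.cos (2 * α * k + t + α))
        = Real.cos (2 * α * k + t + α) ∧
      bh * (q k).2 * (ah + ch * Real.cos (2 * α * k + t + α))
        = ah * Real.sin (2 * α * k + t + α) := by
    intro k
    obtain ⟨h1, h2⟩ := hq k
    have e1 : 2 * α * (k : ℝ) + t = (2 * α * k + t + α) - α := by ring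
    have e2 : 2 * α * ((k + 1 : ℤ) : ℝ) + t = (2 * α * k + t + α) + α := by push_cast; ring
    rw [hv, hfh] at h1 h2
    dsimp only at h1 h2
    rw [e1, Real.cos_sub, Real.sin_sub] at h1
    rw [e2, Real.cos_add (2 * α * k + t + α), Real.sin_add (2 * α * k + t + α)] at h2
    apply pole_formula ah bh ch (Real.cos α) (Real.sin α) _ _ _ _ hC hS
      (by linarith [Real.sin_sq_add_cos_sq (2 * α * (k : ℝ) + t + α)])
    · linear_combination h1
    · linear_combination h2
  refine ⟨fun k => ?_, fun k => ?_⟩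
  · obtain ⟨h1, h2⟩ := key k
    have hd := hD (2 * α * k + t + α)
    have hsc := Real.sin_sq_add_cos_sq (2 * α * (k : ℝ) + t + α)
    generalize Real.cos (2 * α * k + t + α) = x at *
    generalize Real.sin (2 * α * k + t + α) = y at *
    obtain ⟨D, hDd⟩ : ∃ D, D = ah + ch * x := ⟨_, rfl⟩
    rw [← hDd] at h1 h2 hd
    have q1 : (q k).1 = x / D - ch := by
      rw [eq_sub_iff_add_eq, eq_div_iff hd.ne', h1]
    have q2 : (q k).2 = ah * y / (bh * D) := by
      field_simp; linear_combination h2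
    have hR0 : 0 ≤ R1 := by rw [hR1]; positivity
    rw [← Real.sqrt_sq hR0]
    congr 1
    rw [hR1, hO1, q1, q2]
    dsimp only
    have hb2 : bh ^ 2 = ah ^ 2 - ch ^ 2 := by linarith
    have hy : y ^ 2 = 1 - x ^ 2 := by linarith
    have e1 : x / D - ch - -ch * (1 + bh ^ 2) / bh ^ 2
        = ah * (ah * x + ch) / (bh ^ 2 * D) := by
      field_simp
      rw [hDd]
      linear_combination x * hc2
    rw [e1, sub_zero]
    field_simp
    rw [hy, hb2, hDd]
    ring
  · obtain ⟨h1, h2⟩ := key k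
    obtain ⟨h3, h4⟩ := key (k + 1)
    have hw1 := (hq k).2
    have hw2 := (hq (k + 1)).1
    have e0 : 2 * α * ((k + 1 : ℤ) : ℝ) + t = 2 * α * k + t + α + α := by push_cast; ring
    have e1 : 2 * α * (k : ℝ) + t + α = (2 * α * k + t + α + α) - α := by ring
    rw [hv, hfh, e0] at hw1 hw2
    rw [e0] at h3 h4
    rw [e1] at h1 h2
    have hd1 := hD (2 * α * (k : ℝ) + t + α + α - α)
    have hd2 := hD (2 * α * (k : ℝ) + t + α + α + α)
    rw [← e1] at hd1 h1 h2
    have hsc := Real.sin_sq_add_cos_sq (2 * α * (k : ℝ) + t + α + α)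
    have c1 : Real.cos (2 * α * (k : ℝ) + t + α) = _ :=
      (congrArg Real.cos e1).trans (Real.cos_sub _ _)
    have s1 : Real.sin (2 * α * (k : ℝ) + t + α) = _ :=
      (congrArg Real.sin e1).trans (Real.sin_sub _ _)
    rw [c1] at h1 h2 hd1
    rw [s1] at h2
    rw [Real.cos_add (2 * α * (k : ℝ) + t + α + α) α] at h3 h4 hd2
    rw [Real.sin_add (2 * α * (k : ℝ) + t + α + α) α] at h4
    clear c1 s1
    try dsimp only at hw1 hw2
    generalize Real.cos (2 * α * (k : ℝ) + t + α + α) = x at *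
    generalize Real.sin (2 * α * (k : ℝ) + t + α + α) = y at *
    clear key hq hv hD
    generalize Real.cos α = C at *
    generalize Real.sin α = S at *
    generalize q k = P at h1 h2 h3 h4 hw1 hw2 ⊢
    generalize q (k + 1) = Q at h1 h2 h3 h4 hw1 hw2 ⊢
    obtain ⟨p1, p2⟩ := P
    obtain ⟨r1, r2⟩ := Q
    try dsimp only at h1 h2 h3 h4 hw1 hw2 ⊢
    set D1 := ah + ch * (x * C + y * S) with hD1
    set D2 := ah + ch * (x * C - y * S) with hD2
    have hG : 0 < ah + ch * C * x := by
      have : D1 + D2 = 2 * (ah + ch * C * x) := by rw [hD1, hD2]; ring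
      linarith
    have hne : r1 - p1 ≠ 0 ∨ r2 - p2 ≠ 0 := by
      by_contra! hcon
      obtain ⟨g1, g2⟩ := hcon
      have g1 : r1 = p1 := by linarith
      have g2 : r2 = p2 := by linarith
      subst g1 g2
      have hD12 : D1 = D2 := by
        have : (x * C + y * S) * D2 = (x * C - y * S) * D1 := by
          rw [← h1, ← h3]; ring
        have h5 : ah * (D1 - D2) = 0 := by
          have : ch * ((x * C + y * S) * D2 - (x * C - y * S) * D1) = 0 := by rw [this]; ring
          rw [hD1, hD2] at *
          linear_combination this
        rcases mul_eq_zero.1 h5 with h | h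
        · exact absurd h ha.ne'
        · linarith
      rw [hD12] at h1 h2
      have hyy : y * S = 0 := by linarith
      have hxx : ah * (x * S) = 0 := by linarith
      have hy0 : y = 0 := (mul_eq_zero.1 hyy).resolve_right hS.ne'
      have hx0 : x = 0 := (mul_eq_zero.1 ((mul_eq_zero.1 hxx).resolve_left ha.ne')).resolve_right hS.ne'
      rw [hx0, hy0] at hsc
      norm_num at hsc
    have ha1p : a1 ≠ 0 := by rw [ha1]; positivity
    have hb1p : b1 ≠ 0 := by rw [hb1]; positivity
    obtain ⟨G, hGd⟩ : ∃ G, G = ah + ch * C * x := ⟨_, rfl⟩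
    rw [← hGd] at hG
    have hDs : D1 + D2 = 2 * G := by rw [hD1, hD2, hGd]; ring
    have hDs0 : D1 + D2 ≠ 0 := by linarith
    obtain ⟨s0, hs0⟩ : ∃ s0, s0 = D2 / (D1 + D2) := ⟨_, rfl⟩
    have hs1 : s0 * (D1 + D2) = D2 := by rw [hs0]; field_simp
    -- coordinates of the tangency point
    have hT1 : p1 + s0 * (r1 - p1) = C * x / G - ch := by
      have : (p1 + s0 * (r1 - p1) + ch) * (D1 + D2) = 2 * C * x := by
        linear_combination h1 + h3 + (r1 - p1) * hs1
      rw [hDs] at this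
      rw [eq_sub_iff_add_eq, eq_div_iff hG.ne']
      linear_combination this / 2
    have hT2 : p2 + s0 * (r2 - p2) = ah * C * y / (bh * G) := by
      have : bh * (p2 + s0 * (r2 - p2)) * (D1 + D2) = 2 * ah * C * y := by
        linear_combination h2 + h4 + bh * (r2 - p2) * hs1
      rw [hDs] at this
      field_simp
      linear_combination this / 2
    have hX : p1 + s0 * (r1 - p1) - x1
        = ah * C * (ah * x + ch * C) / (κ ^ 2 * G) := by
      rw [hT1, hx1]
      field_simp
      rw [hGd, hK]
      ring
    have hon : (p1 + s0 * (r1 - p1) - x1) ^ 2 / a1 ^ 2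
        + (p2 + s0 * (r2 - p2)) ^ 2 / b1 ^ 2 = 1 := by
      rw [hX, hT2, ha1, hb1]
      have hy : y ^ 2 = 1 - x ^ 2 := by linarith
      field_simp
      rw [hy, hGd, hK]
      ring
    have hw : (ah * x + ch * C) * (r1 - p1) + bh * y * (r2 - p2) = 0 := by
      field_simp at hw1 hw2
      linear_combination hw2 - hw1
    have hgrad : (p1 + s0 * (r1 - p1) - x1) * (r1 - p1) / a1 ^ 2
        + (p2 + s0 * (r2 - p2)) * (r2 - p2) / b1 ^ 2 = 0 := by
      rw [hX, hT2, ha1, hb1]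
      have : ah * C * (ah * x + ch * C) / (κ ^ 2 * G) * (r1 - p1)
            / (ah * C / κ ^ 2) ^ 2
          + ah * C * y / (bh * G) * (r2 - p2) / (ah * C / (bh * κ)) ^ 2
          = κ ^ 2 / (ah * C * G)
            * ((ah * x + ch * C) * (r1 - p1) + bh * y * (r2 - p2)) := by
        field_simp
      rw [this, hw, mul_zero]
    refine ⟨(p1 + s0 * (r1 - p1), p2 + s0 * (r2 - p2)), ⟨⟨s0, ?_⟩, hon⟩, ?_⟩
    · ext <;> simp
    · rintro ⟨z1, z2⟩ ⟨⟨s, hs⟩, hz⟩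
      simp only [Prod.mk_sub_mk, Prod.smul_mk, Prod.mk_add_mk, smul_eq_mul, Prod.mk.injEq] at hs
      obtain ⟨rfl, rfl⟩ := hs
      have hr : s - s0 = 0 := by
        refine tangent_unique x1 a1 b1 _ _ (r1 - p1) (r2 - p2) (s - s0) ha1p hb1p hne hon hgrad ?_
        dsimp only at hz
        rw [← hz]
        ring
      have : s = s0 := by linarith
      rw [this]
end

section
/- Let N = 5, α = π/5, a > b > 0, c = √(a² − b²), and t ∈ ℝ. Put u_k = (a·cos(2πk/5 + t), b·sin(2πk/5 + t)) for k = 0, …, 4 (indices mod 5). For each k let p_k be the pole of the line through u_k and u_{k+1} with respect to the unit circle centered at f_1 = (−c·cos α, 0), and p′_k the pole of the same line with respect to the unit circle centered at f_2 = (c·cos α, 0). Let A_1 be the area of the pentagon p_0 p_1 p_2 p_3 p_4 and A_2 the area of the pentagon p′_0 p′_1 p′_2 p′_3 p′_4, each given by half the absolute value of the shoelace sum Σ_k (x_k·y_{k+1} − x_{k+1}·y_k). Then 1/A_1 + 1/A_2 = (b/(40·sin(2π/5)·a))·((a⁴ + 10a²b² + 5b⁴)·(√5·(a² + 3b²) +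 5a² + 7b²))/(5a⁴ + 10a²b² + b⁴); in particular this quantity does not depend on t. -/
open Real Finset

/-- The pole of a chord, solved from its two defining equations. -/
lemma pole_solve (a b w C S x y X Y : ℝ) (hS : S ≠ 0) (hxy : x ^ 2 + y ^ 2 = 1)
    (h1 : (a * (x * C + y * S) - w * C) * X + (b * (y * C - x * S)) * Y = 1)
    (h2 : (a * (x * C - y * S) - w * C) * X + (b * (y * C + x * S)) * Y = 1) :
    C * (a - w * x) * X = x ∧ b * C * (a - w * x) * Y = a * y := by
  have h3 : b * x * Y = a * y * X := by
    have : S * (b * x * Y - a * y * X) = 0 := by linear_combination (h2 - h1) / 2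
    rcases mul_eq_zero.mp this with h | h
    · exact absurd h hS
    · linarith
  have h4 : (a * x - w) * C * X + b * C * y * Y = 1 := by linear_combination (h1 + h2) / 2
  constructor
  · linear_combination x * h4 - a * C * X * hxy - C * y * h3
  · linear_combination a * y * h4 - a * b * C * Y * hxy + (a * x - w) * C * h3

/-- The product of the five distances. -/
lemma prod_id (a w g s x y : ℝ) (hg : 4 * g ^ 2 + 2 * g - 1 = 0) (hs : s ^ 2 = 1 - g ^ 2)
    (hxy : x ^ 2 + y ^ 2 = 1) :
    (a - w * x) * (a - w * (g * x - s * y)) * (a - w * ((-1/2 - g) * x - 2 * s * g * y))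
      * (a - w * ((-1/2 - g) * x + 2 * s * g * y)) * (a - w * (g * x + s * y))
    = (16 * a ^ 5 - 20 * a ^ 3 * w ^ 2 + 5 * a * w ^ 4
        - w ^ 5 * (16 * x ^ 5 - 20 * x ^ 3 + 5 * x)) / 16 := by
  have e1 : (a - w * (g * x - s * y)) * (a - w * (g * x + s * y))
      = a ^ 2 - 2 * a * w * g * x + w ^ 2 * (x ^ 2 - 1 + g ^ 2) := by grind
  have e2 : (a - w * ((-1/2 - g) * x - 2 * s * g * y)) * (a - w * ((-1/2 - g) * x + 2 * s * g * y))
      = a ^ 2 + a * w * (1 + 2 * g) * x + w ^ 2 * (x ^ 2 - 1 + (1/2 + g) ^ 2) := by grind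
  calc _ = (a - w * x) * ((a - w * (g * x - s * y)) * (a - w * (g * x + s * y))) *
        ((a - w * ((-1/2 - g) * x - 2 * s * g * y))
          * (a - w * ((-1/2 - g) * x + 2 * s * g * y))) := by ring
    _ = _ := by
      rw [e1, e2]
      clear e1 e2 hs hxy
      grind

/-- The sum of products of three consecutive distances. -/
lemma num_id (a w g s x y : ℝ) (hg : 4 * g ^ 2 + 2 * g - 1 = 0) (hs : s ^ 2 = 1 - g ^ 2)
    (hxy : x ^ 2 + y ^ 2 = 1) (d0 d1 d2 d3 d4 : ℝ)
    (h0 : d0 = a - w * x) (h1 : d1 = a - w * (g * x - s * y))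
    (h2 : d2 = a - w * ((-1/2 - g) * x - 2 * s * g * y))
    (h3 : d3 = a - w * ((-1/2 - g) * x + 2 * s * g * y))
    (h4 : d4 = a - w * (g * x + s * y)) :
    d2 * d3 * d4 + d3 * d4 * d0 + d4 * d0 * d1 + d0 * d1 * d2 + d1 * d2 * d3
    = 5 * a ^ 3 + 5 * a * w ^ 2 * (2 * g - 1) / 4 := by
  have e1 : d1 * d4
      = a ^ 2 - 2 * a * w * g * x + w ^ 2 * (x ^ 2 - 1 + g ^ 2) := by subst h1 h4; grind
  have e2 : d2 * d3
      = a ^ 2 + a * w * (1 + 2 * g) * x + w ^ 2 * (x ^ 2 - 1 + (1/2 + g) ^ 2) := by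
    clear e1; subst h2 h3; grind
  have e3 : d1 * d2 + d3 * d4 = 2 * a ^ 2 + a * w * x
      + w ^ 2 * (2 * g * (-1/2 - g) * x ^ 2 + 4 * g * (1 - g ^ 2) * (1 - x ^ 2)) := by
    clear e1 e2; subst h1 h2 h3 h4; grind
  have e4 : d1 + d4 = 2 * a - 2 * w * g * x := by subst h1 h4; ring
  calc _ = d0 * (d1 * d2 + d3 * d4) + (d2 * d3) * (d1 + d4) + d0 * (d1 * d4) := by ring
    _ = _ := by
      rw [e1, e2, e3, e4, h0]
      clear e1 e2 e3 e4 h0 h1 h2 h3 h4 hs hxy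
      grind

/-- A single cross product of consecutive (translated) poles. -/
lemma cross_id (a b C s d d' x y x' y' X Y X' Y' : ℝ) (hb : b ≠ 0) (hC : C ≠ 0)
    (hd : d ≠ 0) (hd' : d' ≠ 0)
    (h1 : C * d * X = x) (h2 : b * C * d * Y = a * y)
    (h1' : C * d' * X' = x') (h2' : b * C * d' * Y' = a * y')
    (hs : x * y' - x' * y = s) :
    X * Y' - X' * Y = a * s / (C ^ 2 * b) * (1 / (d * d')) := by
  field_simp
  rw [← hs]
  linear_combination b * C * d' * Y' * h1 - b * C * d * Y * h1' + x * h2' - x' * h2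

/-- The cosine of `2π/5`. -/
lemma g_facts : 4 * (cos (2 * π / 5)) ^ 2 + 2 * cos (2 * π / 5) - 1 = 0 ∧
    cos (π / 5) = (1 + √5) / 4 ∧ cos (2 * π / 5) = (√5 - 1) / 4 := by
  have h := Real.cos_pi_div_five
  have h5 : √5 ^ 2 = 5 := Real.sq_sqrt (by norm_num)
  have h2 : cos (2 * π / 5) = (√5 - 1) / 4 := by
    rw [show 2 * π / 5 = 2 * (π / 5) by ring, Real.cos_two_mul, h]
    grind
  refine ⟨?_, h, h2⟩
  rw [h2]; grind

/-- The shoelace sum for a focus `(w * cos (π/5), 0)` with `|w| < a`. -/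
lemma shoelace (a b t w : ℝ) (hw : |w| < a) (hb : 0 < b)
    (u : ℤ → ℝ × ℝ)
    (hu : ∀ k : ℤ, u k =
      (a * Real.cos (2 * Real.pi * (k : ℝ) / 5 + t),
       b * Real.sin (2 * Real.pi * (k : ℝ) / 5 + t)))
    (f : ℝ × ℝ) (hf : f = (w * Real.cos (Real.pi / 5), 0))
    (p : ℤ → ℝ × ℝ)
    (hp : ∀ k : ℤ,
      (((u k).1 - f.1) * ((p k).1 - f.1) + ((u k).2 - f.2) * ((p k).2 - f.2) = 1) ∧
      (((u (k + 1)).1 - f.1) * ((p k).1 - f.1) + ((u (k + 1)).2 - f.2) * ((p k).2 - f.2) = 1)) :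
    ∃ P : ℝ, 0 < P ∧ P = (16 * a ^ 5 - 20 * a ^ 3 * w ^ 2 + 5 * a * w ^ 4
        - w ^ 5 * (16 * cos (π / 5 + t) ^ 5 - 20 * cos (π / 5 + t) ^ 3
          + 5 * cos (π / 5 + t))) / 16 ∧
      ∑ k ∈ Finset.range 5,
      ((p (k : ℤ)).1 * (p ((((k + 1) % 5 : ℕ)) : ℤ)).2 -
        (p ((((k + 1) % 5 : ℕ)) : ℤ)).1 * (p (k : ℤ)).2) =
      a * sin (2 * π / 5) / (cos (π / 5) ^ 2 * b) *
        ((5 * a ^ 3 + 5 * a * w ^ 2 * (2 * cos (2 * π / 5) - 1) / 4) / P) := by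
  obtain ⟨hg, hC, hg'⟩ := g_facts
  have hCpos : cos (π / 5) ≠ 0 := by rw [hC]; positivity
  have hS : sin (π / 5) ≠ 0 :=
    (Real.sin_pos_of_pos_of_lt_pi (by positivity) (by linarith [Real.pi_pos])).ne'
  have hpole : ∀ (k : ℤ) (θ : ℝ), θ = 2 * π * (k : ℝ) / 5 + (π / 5 + t) →
      cos (π / 5) * (a - w * cos θ) * ((p k).1 - f.1) = cos θ ∧
      b * cos (π / 5) * (a - w * cos θ) * ((p k).2 - f.2) = a * sin θ := by
    intro k θ hθ
    obtain ⟨h1, h2⟩ := hp k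
    rw [hu, show 2 * π * (k : ℝ) / 5 + t = θ - π / 5 by rw [hθ]; ring, Real.cos_sub,
      Real.sin_sub] at h1
    rw [hu, show 2 * π * ((k + 1 : ℤ) : ℝ) / 5 + t = θ + π / 5 by rw [hθ]; push_cast; ring,
      Real.cos_add, Real.sin_add] at h2
    apply pole_solve a b w _ (sin (π / 5)) (cos θ) (sin θ) _ _ hS (Real.cos_sq_add_sin_sq θ)
    · subst hf; simp only at h1 ⊢; linear_combination h1
    · subst hf; simp only at h2 ⊢; linear_combination h2
  have hdpos : ∀ θ : ℝ, 0 < a - w * cos θ := by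
    intro θ
    have h1 : w * cos θ ≤ |w| * 1 := by
      calc w * cos θ ≤ |w * cos θ| := le_abs_self _
        _ = |w| * |cos θ| := abs_mul _ _
        _ ≤ |w| * 1 := by gcongr; exact Real.abs_cos_le_one θ
    linarith
  set φ := π / 5 + t with hφ
  set γ := 2 * π / 5 with hγ
  have hsg : sin γ ^ 2 = 1 - cos γ ^ 2 := Real.sin_sq γ
  have hxy := Real.cos_sq_add_sin_sq φ
  have c2 : cos (2 * γ) = -1/2 - cos γ := by rw [Real.cos_two_mul]; linarith
  have s2 : sin (2 * γ) = 2 * sin γ * cos γ := Real.sin_two_mul γ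
  have e1 := hpole 0 φ (by push_cast; ring)
  have e2 := hpole 1 (φ + γ) (by rw [hγ]; push_cast; ring)
  have e3 := hpole 2 (φ + 2 * γ) (by rw [hγ]; push_cast; ring)
  have e4 := hpole 3 (φ + 3 * γ) (by rw [hγ]; push_cast; ring)
  have e5 := hpole 4 (φ + 4 * γ) (by rw [hγ]; push_cast; ring)
  have r4 : φ + 3 * γ = (φ - 2 * γ) + 2 * π := by rw [hγ]; ring
  have r5 : φ + 4 * γ = (φ - γ) + 2 * π := by rw [hγ]; ring
  rw [r4, Real.cos_add_two_pi, Real.sin_add_two_pi] at e4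
  rw [r5, Real.cos_add_two_pi, Real.sin_add_two_pi] at e5
  have q0 := hdpos φ
  have q1 := hdpos (φ + γ)
  have q2 := hdpos (φ + 2 * γ)
  have q3 := hdpos (φ - 2 * γ)
  have q4 := hdpos (φ - γ)
  have hcr : ∀ A B : ℝ, B - A = γ → cos A * sin B - cos B * sin A = sin γ := by
    intro A B h
    rw [← h, Real.sin_sub]; ring
  have hcr' : cos (φ + 2 * γ) * sin (φ - 2 * γ) - cos (φ - 2 * γ) * sin (φ + 2 * γ) = sin γ := by
    rw [← Real.cos_add_two_pi (φ - 2 * γ), ← Real.sin_add_two_pi (φ - 2 * γ)]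
    exact hcr _ _ (by rw [hγ]; ring)
  have x1 := cross_id a b _ _ _ _ _ _ _ _ _ _ _ _ hb.ne' hCpos q0.ne' q1.ne' e1.1 e1.2 e2.1 e2.2
    (hcr _ _ (by ring))
  have x2 := cross_id a b _ _ _ _ _ _ _ _ _ _ _ _ hb.ne' hCpos q1.ne' q2.ne' e2.1 e2.2 e3.1 e3.2
    (hcr _ _ (by ring))
  have x3 := cross_id a b _ _ _ _ _ _ _ _ _ _ _ _ hb.ne' hCpos q2.ne' q3.ne' e3.1 e3.2 e4.1 e4.2
    hcr'
  have x4 := cross_id a b _ _ _ _ _ _ _ _ _ _ _ _ hb.ne' hCpos q3.ne' q4.ne' e4.1 e4.2 e5.1 e5.2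
    (hcr _ _ (by ring))
  have x5 := cross_id a b _ _ _ _ _ _ _ _ _ _ _ _ hb.ne' hCpos q4.ne' q0.ne' e5.1 e5.2 e1.1 e1.2
    (hcr _ _ (by ring))
  have k1 : cos (φ + γ) = cos γ * cos φ - sin γ * sin φ := by rw [Real.cos_add]; ring
  have k2 : cos (φ + 2 * γ) = (-1/2 - cos γ) * cos φ - 2 * sin γ * cos γ * sin φ := by
    rw [Real.cos_add, c2, s2]; ring
  have k3 : cos (φ - 2 * γ) = (-1/2 - cos γ) * cos φ + 2 * sin γ * cos γ * sin φ := by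
    rw [Real.cos_sub, c2, s2]; ring
  have k4 : cos (φ - γ) = cos γ * cos φ + sin γ * sin φ := by rw [Real.cos_sub]; ring
  have hP := prod_id a w (cos γ) (sin γ) (cos φ) (sin φ) hg hsg hxy
  rw [← k1, ← k2, ← k3, ← k4] at hP
  have hM := num_id a w (cos γ) (sin γ) (cos φ) (sin φ) hg hsg hxy
    (a - w * cos φ) (a - w * cos (φ + γ)) (a - w * cos (φ + 2 * γ)) (a - w * cos (φ - 2 * γ))
    (a - w * cos (φ - γ)) rfl (by rw [k1]) (by rw [k2]) (by rw [k3]) (by rw [k4])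
  refine ⟨_, ?_, hP, ?_⟩
  · positivity
  · rw [← hM]
    clear hC hφ hpole
    generalize cos (π / 5) = K at *
    simp only [Finset.sum_range_succ, Finset.sum_range_zero]
    norm_num
    generalize a - w * cos φ = d0 at *
    generalize a - w * cos (φ + γ) = d1 at *
    generalize a - w * cos (φ + 2 * γ) = d2 at *
    generalize a - w * cos (φ - 2 * γ) = d3 at *
    generalize a - w * cos (φ - γ) = d4 at *
    have key : (d2 * d3 * d4 + d3 * d4 * d0 + d4 * d0 * d1 + d0 * d1 * d2 + d1 * d2 * d3)
        / (d0 * d1 * d2 * d3 * d4) = 1 / (d0 * d1) + 1 / (d1 * d2) + 1 / (d2 * d3)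
          + 1 / (d3 * d4) + 1 / (d4 * d0) := by
      field_simp
    rw [key]
    linear_combination x1 + x2 + x3 + x4 + x5

/-- For `N = 5`, the harmonic mean relation for the areas of the two lateral
harmonic pentagons (the polar images of the homothetic family with respect to
the two foci of its inner ellipse):
`1/A₁ + 1/A₂ = (b/(40·sin(2π/5)·a))·((a⁴ + 10a²b² + 5b⁴)·(√5·(a² + 3b²) + 5a² + 7b²))/(5a⁴ + 10a²b² + b⁴)`,
independent of `t`. -/
theorem lateral_harmonic_areas_five (a b t : ℝ) (hab : b < a) (hb : 0 < b)
    (c : ℝ) (hc : c = Real.sqrt (a ^ 2 - b ^ 2))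
    (u : ℤ → ℝ × ℝ)
    (hu : ∀ k : ℤ, u k =
      (a * Real.cos (2 * Real.pi * (k : ℝ) / 5 + t),
       b * Real.sin (2 * Real.pi * (k : ℝ) / 5 + t)))
    (f1 f2 : ℝ × ℝ)
    (hf1 : f1 = (-c * Real.cos (Real.pi / 5), 0))
    (hf2 : f2 = (c * Real.cos (Real.pi / 5), 0))
    (p p' : ℤ → ℝ × ℝ)
    (hp : ∀ k : ℤ,
      (((u k).1 - f1.1) * ((p k).1 - f1.1) + ((u k).2 - f1.2) * ((p k).2 - f1.2) = 1) ∧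
      (((u (k + 1)).1 - f1.1) * ((p k).1 - f1.1) + ((u (k + 1)).2 - f1.2) * ((p k).2 - f1.2) = 1))
    (hp' : ∀ k : ℤ,
      (((u k).1 - f2.1) * ((p' k).1 - f2.1) + ((u k).2 - f2.2) * ((p' k).2 - f2.2) = 1) ∧
      (((u (k + 1)).1 - f2.1) * ((p' k).1 - f2.1) + ((u (k + 1)).2 - f2.2) * ((p' k).2 - f2.2) = 1))
    (A1 A2 : ℝ)
    (hA1 : A1 = |∑ k ∈ Finset.range 5,
      ((p (k : ℤ)).1 * (p ((((k + 1) % 5 : ℕ)) : ℤ)).2 -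
        (p ((((k + 1) % 5 : ℕ)) : ℤ)).1 * (p (k : ℤ)).2)| / 2)
    (hA2 : A2 = |∑ k ∈ Finset.range 5,
      ((p' (k : ℤ)).1 * (p' ((((k + 1) % 5 : ℕ)) : ℤ)).2 -
        (p' ((((k + 1) % 5 : ℕ)) : ℤ)).1 * (p' (k : ℤ)).2)| / 2) :
    1 / A1 + 1 / A2 =
      (b / (40 * Real.sin (2 * Real.pi / 5) * a)) *
        ((a ^ 4 + 10 * a ^ 2 * b ^ 2 + 5 * b ^ 4) *
          (Real.sqrt 5 * (a ^ 2 + 3 * b ^ 2) + 5 * a ^ 2 + 7 * b ^ 2)) /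
        (5 * a ^ 4 + 10 * a ^ 2 * b ^ 2 + b ^ 4) := by
  have ha : 0 < a := hb.trans hab
  have hc2 : c ^ 2 = a ^ 2 - b ^ 2 := by rw [hc]; exact Real.sq_sqrt (by nlinarith)
  have hc0 : 0 ≤ c := by rw [hc]; positivity
  have hca : c < a := by nlinarith
  obtain ⟨P1, hP1, hP1e, h1⟩ := shoelace a b t (-c) (by rwa [abs_neg, abs_of_nonneg hc0]) hb u hu
    f1 hf1 p hp
  obtain ⟨P2, hP2, hP2e, h2⟩ := shoelace a b t c (by rwa [abs_of_nonneg hc0]) hb u hu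
    f2 hf2 p' hp'
  obtain ⟨-, hC, hg⟩ := g_facts
  have hs : 0 < sin (2 * π / 5) :=
    Real.sin_pos_of_pos_of_lt_pi (by positivity) (by linarith [Real.pi_pos])
  rw [h1] at hA1
  rw [h2] at hA2
  have h5 : √5 ^ 2 = 5 := Real.sq_sqrt (by norm_num)
  have h5p : 0 < √5 := by positivity
  have h53 : √5 < 3 := by nlinarith
  have hPP : P1 + P2 = a * (a ^ 4 + 10 * a ^ 2 * b ^ 2 + 5 * b ^ 4) / 8 := by
    rw [hP1e, hP2e]
    have : c ^ 4 = (a ^ 2 - b ^ 2) ^ 2 := by rw [← hc2]; ring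
    linear_combination (-5/2 * a ^ 3) * hc2 + (5/8 * a) * this
  have hM : ∀ w : ℝ, w ^ 2 = c ^ 2 →
      5 * a ^ 3 + 5 * a * w ^ 2 * (2 * cos (2 * π / 5) - 1) / 4
      = 5 * a * (a ^ 2 * (5 + √5) + b ^ 2 * (3 - √5)) / 8 := by
    intro w hw
    rw [hw, hc2, hg]; ring
  rw [hM (-c) (by ring), hC] at hA1
  rw [hM c rfl, hC] at hA2
  have hE : 0 < a ^ 2 * (5 + √5) + b ^ 2 * (3 - √5) := by
    have : 0 < 3 - √5 := by linarith
    positivity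
  have hrel : (a ^ 2 * (5 + √5) + b ^ 2 * (3 - √5)) * (a ^ 2 * (5 - √5) + b ^ 2 * (3 + √5))
      = 4 * (5 * a ^ 4 + 10 * a ^ 2 * b ^ 2 + b ^ 4) := by
    linear_combination (-(a ^ 2 - b ^ 2) ^ 2) * h5
  have hrel2 : (1 + √5) ^ 2 * (a ^ 2 * (5 - √5) + b ^ 2 * (3 + √5))
      = 4 * (√5 * (a ^ 2 + 3 * b ^ 2) + 5 * a ^ 2 + 7 * b ^ 2) := by
    grind
  generalize sin (2 * π / 5) = s at *
  generalize a ^ 2 * (5 + √5) + b ^ 2 * (3 - √5) = E at *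
  generalize a ^ 2 * (5 - √5) + b ^ 2 * (3 + √5) = E' at *
  rw [abs_of_pos (by positivity)] at hA1 hA2
  have hsum : 1 / A1 + 1 / A2 = b * (1 + √5) ^ 2 / (5 * a ^ 2 * s * E) * (P1 + P2) := by
    rw [hA1, hA2]
    field_simp
    ring
  have hD : 0 < 5 * a ^ 4 + 10 * a ^ 2 * b ^ 2 + b ^ 4 := by positivity
  rw [hsum, hPP]
  generalize √5 * (a ^ 2 + 3 * b ^ 2) + 5 * a ^ 2 + 7 * b ^ 2 = F at *
  generalize 5 * a ^ 4 + 10 * a ^ 2 * b ^ 2 + b ^ 4 = D at *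
  have hfin : (1 + √5) ^ 2 * D = E * F := by
    linear_combination (-(1 + √5) ^ 2 / 4) * hrel + E / 4 * hrel2
  generalize (1 + √5) ^ 2 = W at *
  field_simp
  linear_combination 40 * hfin
end
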